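/- Let A be a complex Banach algebra and let A♯ = A ⊕ ℂ be its unitization, with multiplication (a,r)(b,s) = (ab + sa + rb, rs) and norm ‖(a,r)‖ = ‖a‖ + |r|. Then A is cyclically amenable if and only if A♯ is cyclically amenable. -/

import Mathlib

/-- `D : A → A*` (a continuous linear map into the dual) is a *derivation* when
`D(ab) = D(a)·b + a·D(b)`, where `A*` is an `A`-bimodule via `(F·a)(x) = F(ax)` and
`(a·F)(x) = F(xa)`; pairing against `x : A` gives the condition below. -/
def IsDerivation {A : Type*} [NonUnitalNormedRing A] [NormedSpace ℂ A]
    (D : A →L[ℂ] (A →L[ℂ] ℂ)) : Prop :=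
  ∀ a b x : A, D (a * b) x = D a (b * x) + D b (x * a)

/-- A map `D : A → A*` is *cyclic* when `⟨D(a), b⟩ + ⟨D(b), a⟩ = 0` for all `a, b`. -/
def IsCyclicMap {A : Type*} [NonUnitalNormedRing A] [NormedSpace ℂ A]
    (D : A →L[ℂ] (A →L[ℂ] ℂ)) : Prop :=
  ∀ a b : A, D a b + D b a = 0

/-- `D : A → A*` is *inner* if `D = ad_F` for some `F ∈ A*`, where
`ad_F(a) = F·a - a·F`, i.e. `⟨ad_F(a), x⟩ = F(ax) - F(xa)`. -/
def IsInnerDerivation {A : Type*} [NonUnitalNormedRing A] [NormedSpace ℂ A]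
    (D : A →L[ℂ] (A →L[ℂ] ℂ)) : Prop :=
  ∃ F : A →L[ℂ] ℂ, ∀ a x : A, D a x = F (a * x) - F (x * a)

/-- A Banach algebra `A` is *cyclically weakly amenable* if every continuous derivation
from `A` into `A*` is cyclic. -/
def CyclicallyWeaklyAmenable (A : Type*) [NonUnitalNormedRing A] [NormedSpace ℂ A] : Prop :=
  ∀ D : A →L[ℂ] (A →L[ℂ] ℂ), IsDerivation D → IsCyclicMap D

/-- A Banach algebra `A` is *weakly amenable* if every continuous derivation
from `A` into `A*` is inner. -/
def WeaklyAmenable (A : Type*) [NonUnitalNormedRing A] [NormedSpace ℂ A] : Prop :=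
  ∀ D : A →L[ℂ] (A →L[ℂ] ℂ), IsDerivation D → IsInnerDerivation D

/-- A Banach algebra `A` is *cyclically amenable* if every continuous cyclic derivation
from `A` into `A*` is inner. -/
def CyclicallyAmenable (A : Type*) [NonUnitalNormedRing A] [NormedSpace ℂ A] : Prop :=
  ∀ D : A →L[ℂ] (A →L[ℂ] ℂ), IsDerivation D → IsCyclicMap D → IsInnerDerivation D

/-!
Restriction along the inclusion `A → A♯` and pullback along the projection `A♯ → A` are mutually
inverse on cyclic derivations. A derivation kills the unit, and a cyclic one then also kills it in
the second variable, so it is determined by its restriction to `A`. The projection `A♯ → A` is not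
multiplicative, but the failure of multiplicativity only contributes terms of the form
`D a b + D b a`, which vanish by cyclicity. Both maps preserve commutators, so they carry inner
derivations to inner derivations.
-/

section Pullback

variable {A B : Type*} [NonUnitalNormedRing A] [NormedSpace ℂ A]
  [NonUnitalNormedRing B] [NormedSpace ℂ B] {D : A →L[ℂ] (A →L[ℂ] ℂ)}

theorem IsDerivation.bilinearComp (hD : IsDerivation D) {f : B →L[ℂ] A}
    (hf : ∀ a b, f (a * b) = f a * f b) : IsDerivation (D.bilinearComp f f) := fun a b x ↦ by
  simpa only [ContinuousLinearMap.bilinearComp_apply, hf] using hD (f a) (f b) (f x)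

theorem IsCyclicMap.bilinearComp (hD : IsCyclicMap D) (f : B →L[ℂ] A) :
    IsCyclicMap (D.bilinearComp f f) :=
  fun a b ↦ hD (f a) (f b)

theorem isInnerDerivation_iff_exists_lie :
    IsInnerDerivation D ↔ ∃ F : A →L[ℂ] ℂ, ∀ a x, D a x = F ⁅a, x⁆ := by
  simp only [IsInnerDerivation, Ring.lie_def, map_sub]

theorem IsInnerDerivation.bilinearComp (hD : IsInnerDerivation D) {f : B →L[ℂ] A}
    (hf : ∀ a b, f ⁅a, b⁆ = ⁅f a, f b⁆) : IsInnerDerivation (D.bilinearComp f f) := by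
  obtain ⟨F, hF⟩ := isInnerDerivation_iff_exists_lie.mp hD
  refine isInnerDerivation_iff_exists_lie.mpr ⟨F.comp f, fun a x ↦ ?_⟩
  rw [ContinuousLinearMap.bilinearComp_apply, ContinuousLinearMap.comp_apply, hf, hF]

end Pullback

section Unit

variable {A : Type*} [NormedRing A] [NormedSpace ℂ A] {D : A →L[ℂ] (A →L[ℂ] ℂ)}

theorem IsDerivation.map_one_eq_zero (hD : IsDerivation D) : D 1 = 0 := by
  ext x
  simpa using hD 1 1 x

theorem IsDerivation.apply_one_eq_zero (hD : IsDerivation D) (hC : IsCyclicMap D) (a : A) :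
    D a 1 = 0 := by
  simpa [hD.map_one_eq_zero] using hC a 1

end Unit

section UnitizationMaps

open WithLp

variable (𝕜 A : Type*) [NormedField 𝕜] [NonUnitalNormedRing A] [NormedSpace 𝕜 A]

/-- The inclusion `a ↦ (a, 0)` of `A` into its `ℓ¹`-unitization, as a continuous linear map. -/
noncomputable def unitizationInrL : A →L[𝕜] WithLp 1 (Unitization 𝕜 A) where
  toLinearMap := (WithLp.linearEquiv 1 𝕜 (Unitization 𝕜 A)).symm.toLinearMap ∘ₗ
    Unitization.inrHom 𝕜 𝕜 A
  cont := unitization_isometry_inr.continuous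

/-- The projection `(a, r) ↦ a` of the `ℓ¹`-unitization of `A` onto `A`, as a continuous linear
map. -/
noncomputable def unitizationSndL : WithLp 1 (Unitization 𝕜 A) →L[𝕜] A :=
  (Unitization.sndHom 𝕜 𝕜 A ∘ₗ
    (WithLp.linearEquiv 1 𝕜 (Unitization 𝕜 A)).toLinearMap).mkContinuous 1 fun u ↦ by
      rw [one_mul, unitization_norm_def]
      exact le_add_of_nonneg_left (norm_nonneg _)

variable {𝕜 A}

theorem unitizationSndL_unitizationInrL (a : A) :
    unitizationSndL 𝕜 A (unitizationInrL 𝕜 A a) = a :=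
  rfl

variable [IsScalarTower 𝕜 A A] [SMulCommClass 𝕜 A A]

theorem unitizationInrL_mul (a b : A) :
    unitizationInrL 𝕜 A (a * b) = unitizationInrL 𝕜 A a * unitizationInrL 𝕜 A b :=
  congrArg (toLp 1) (Unitization.inr_mul 𝕜 a b)

theorem unitizationInrL_lie (a b : A) :
    unitizationInrL 𝕜 A ⁅a, b⁆ = ⁅unitizationInrL 𝕜 A a, unitizationInrL 𝕜 A b⁆ := by
  simp only [Ring.lie_def, map_sub, unitizationInrL_mul]

theorem unitizationSndL_mul (u v : WithLp 1 (Unitization 𝕜 A)) :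
    unitizationSndL 𝕜 A (u * v) = u.ofLp.fst • unitizationSndL 𝕜 A v +
      v.ofLp.fst • unitizationSndL 𝕜 A u + unitizationSndL 𝕜 A u * unitizationSndL 𝕜 A v :=
  rfl

theorem unitizationSndL_lie (u v : WithLp 1 (Unitization 𝕜 A)) :
    unitizationSndL 𝕜 A ⁅u, v⁆ = ⁅unitizationSndL 𝕜 A u, unitizationSndL 𝕜 A v⁆ := by
  simp only [Ring.lie_def, map_sub, unitizationSndL_mul]
  abel

theorem fst_smul_one_add_unitizationInrL (u : WithLp 1 (Unitization 𝕜 A)) :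
    u.ofLp.fst • 1 + unitizationInrL 𝕜 A (unitizationSndL 𝕜 A u) = u := by
  rw [← Algebra.algebraMap_eq_smul_one]
  exact congrArg (toLp 1) (Unitization.inl_fst_add_inr_snd_eq u.ofLp)

end UnitizationMaps

section UnitizationDerivations

variable {A : Type*} [NonUnitalNormedRing A] [NormedSpace ℂ A] [IsScalarTower ℂ A A]
  [SMulCommClass ℂ A A]

theorem bilinearComp_unitizationSndL_unitizationInrL (D : A →L[ℂ] (A →L[ℂ] ℂ)) :
    (D.bilinearComp (unitizationSndL ℂ A) (unitizationSndL ℂ A)).bilinearComp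
      (unitizationInrL ℂ A) (unitizationInrL ℂ A) = D := by
  ext a b
  simp only [ContinuousLinearMap.bilinearComp_apply, unitizationSndL_unitizationInrL]

theorem IsDerivation.bilinearComp_unitizationInrL_unitizationSndL
    {D : WithLp 1 (Unitization ℂ A) →L[ℂ] (WithLp 1 (Unitization ℂ A) →L[ℂ] ℂ)}
    (hD : IsDerivation D) (hC : IsCyclicMap D) :
    (D.bilinearComp (unitizationInrL ℂ A) (unitizationInrL ℂ A)).bilinearComp
      (unitizationSndL ℂ A) (unitizationSndL ℂ A) = D := by
  ext u v
  conv_rhs =>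
    rw [← fst_smul_one_add_unitizationInrL u, ← fst_smul_one_add_unitizationInrL v]
  simp [hD.map_one_eq_zero, hD.apply_one_eq_zero hC]

theorem IsDerivation.bilinearComp_unitizationSndL {D : A →L[ℂ] (A →L[ℂ] ℂ)}
    (hD : IsDerivation D) (hC : IsCyclicMap D) :
    IsDerivation (D.bilinearComp (unitizationSndL ℂ A) (unitizationSndL ℂ A)) := fun u v x ↦ by
  have leibniz := hD (unitizationSndL ℂ A u) (unitizationSndL ℂ A v) (unitizationSndL ℂ A x)
  have cyclic := hC (unitizationSndL ℂ A u) (unitizationSndL ℂ A v)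
  simp only [ContinuousLinearMap.bilinearComp_apply, unitizationSndL_mul, map_add, map_smul,
    add_apply, smul_apply, smul_eq_mul]
  linear_combination leibniz - x.ofLp.fst * cyclic

theorem CyclicallyAmenable.unitization (h : CyclicallyAmenable A) :
    CyclicallyAmenable (WithLp 1 (Unitization ℂ A)) := fun D hD hC ↦ by
  rw [← hD.bilinearComp_unitizationInrL_unitizationSndL hC]
  exact (h _ (hD.bilinearComp unitizationInrL_mul) (hC.bilinearComp _)).bilinearComp
    unitizationSndL_lie

theorem CyclicallyAmenable.of_unitization
    (h : CyclicallyAmenable (WithLp 1 (Unitization ℂ A))) : CyclicallyAmenable A :=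
  fun D hD hC ↦ by
    rw [← bilinearComp_unitizationSndL_unitizationInrL D]
    exact (h _ (hD.bilinearComp_unitizationSndL hC) (hC.bilinearComp _)).bilinearComp
      unitizationInrL_lie

end UnitizationDerivations

theorem cyclicallyAmenable_unitization_iff_general {A : Type*} [NonUnitalNormedRing A]
    [NormedSpace ℂ A] [IsScalarTower ℂ A A] [SMulCommClass ℂ A A] :
    CyclicallyAmenable A ↔ CyclicallyAmenable (WithLp 1 (Unitization ℂ A)) :=
  ⟨CyclicallyAmenable.unitization, CyclicallyAmenable.of_unitization⟩

/-- A complex Banach algebra `A` is cyclically amenable if and only if its unitization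
`A♯ = A ⊕ ℂ` (with multiplication `(a,r)(b,s) = (ab + sa + rb, rs)` and norm
`‖(a,r)‖ = ‖a‖ + |r|`, realized as `WithLp 1 (Unitization ℂ A)`) is cyclically amenable. -/
theorem cyclicallyAmenable_unitization_iff {A : Type*}
    [NonUnitalNormedRing A] [NormedSpace ℂ A] [IsScalarTower ℂ A A]
    [SMulCommClass ℂ A A] [CompleteSpace A] :
    CyclicallyAmenable A ↔ CyclicallyAmenable (WithLp 1 (Unitization ℂ A)) :=
  cyclicallyAmenable_unitization_iff_general
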